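/- Let d ≥ 6, let m* = (d-1)/4 if d is prime and m* = (d-1)/3 otherwise, and let m > m* be an integer with m < (d-1)/2. Let V ⊆ {0,...,m} be such that every element of {0,...,m} arises as |j-k| for some j,k in V. Define g in C^d by g_j = 2^j if j in V and g_j = 0 otherwise (for 0 ≤ j ≤ d-1). Then supp(V_g g) = {-m,...,m} × Z_d, where {-m,...,m} is taken modulo d. -/

import Mathlib

open Complex Finset

noncomputable def chi (d : ℕ) (a : ZMod d) : ℂ :=
  Complex.exp (-(2 * (Real.pi : ℂ) * Complex.I * (a.val : ℂ)) / (d : ℂ))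

noncomputable def stft (d : ℕ) [NeZero d] (g f : ZMod d → ℂ) (k l : ZMod d) : ℂ :=
  ∑ j : ZMod d, f j * (starRingEnd ℂ) (g (j - k)) * chi d (j * l)

noncomputable def dft (d : ℕ) [NeZero d] (f : ZMod d → ℂ) (l : ZMod d) : ℂ :=
  ∑ j : ZMod d, f j * chi d (j * l)

noncomputable def ft2 (d : ℕ) [NeZero d] (F : ZMod d → ZMod d → ℂ) (a b : ZMod d) : ℂ :=
  ∑ k : ZMod d, ∑ l : ZMod d, F k l * chi d (a * k + b * l)

theorem sum_ne_zero_of_dominant {ι : Type*} [DecidableEq ι] (S : Finset ι) (hS : S.Nonempty)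
    (v : ι → ℕ) (hv : Function.Injective v) (f : ι → ℂ) (c : ℝ) (hc : 0 < c)
    (hf : ∀ j ∈ S, ‖f j‖ = c * 4 ^ v j) : ∑ j ∈ S, f j ≠ 0 := by
  obtain ⟨j0, hj0, hmax⟩ := S.exists_max_image v hS
  intro h0
  rw [← Finset.add_sum_erase S f hj0] at h0
  have h1 : f j0 = -∑ j ∈ S.erase j0, f j := eq_neg_of_add_eq_zero_left h0
  have h2 : ‖f j0‖ ≤ ∑ j ∈ S.erase j0, c * 4 ^ v j := by
    rw [h1, norm_neg]
    refine (norm_sum_le _ _).trans (le_of_eq ?_)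
    exact Finset.sum_congr rfl fun j hj => hf j (Finset.mem_of_mem_erase hj)
  rw [hf j0 hj0, ← Finset.mul_sum] at h2
  have h3 := le_of_mul_le_mul_left h2 hc
  have h4 : ∑ k ∈ (S.erase j0).image v, 4 ^ k < 4 ^ v j0 := by
    apply Nat.geomSum_lt (by norm_num)
    intro k hk
    obtain ⟨j, hj, rfl⟩ := Finset.mem_image.1 hk
    obtain ⟨hne, hjS⟩ := Finset.mem_erase.1 hj
    exact lt_of_le_of_ne (hmax j hjS) fun h => hne (hv h)
  rw [Finset.sum_image fun _ _ _ _ h => hv h] at h4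
  have h5 : (∑ j ∈ S.erase j0, (4 : ℝ) ^ v j) < 4 ^ v j0 := by exact_mod_cast h4
  linarith

theorem norm_chi (d : ℕ) (a : ZMod d) : ‖chi d a‖ = 1 := by
  unfold chi
  have : -(2 * (Real.pi : ℂ) * Complex.I * (a.val : ℂ)) / (d : ℂ)
      = ((-(2 * Real.pi * a.val) / d : ℝ) : ℂ) * Complex.I := by
    push_cast; ring
  rw [this, Complex.norm_exp_ofReal_mul_I]

theorem stmt8 (d m : ℕ) [NeZero d] (hd : 6 ≤ d)
    (hm : if d.Prime then d - 1 < 4 * m else d - 1 < 3 * m)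
    (hm2 : 2 * m < d - 1)
    (V : Finset ℕ) (hV : V ⊆ Finset.range (m + 1))
    (hdiff : ∀ i ≤ m, ∃ j ∈ V, ∃ k ∈ V, k ≤ j ∧ j - k = i)
    (g : ZMod d → ℂ) (hg : ∀ j : ZMod d, g j = if j.val ∈ V then (2 : ℂ) ^ j.val else 0) :
    ∀ k l : ZMod d,
      stft d g g k l ≠ 0 ↔ ∃ a : ℤ, |a| ≤ (m : ℤ) ∧ k = (a : ZMod d) := by
  classical
  intro k l
  have hlt : ∀ n ∈ V, n ≤ m := fun n hn => Nat.lt_succ_iff.1 (Finset.mem_range.1 (hV hn))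
  constructor
  · intro h
    obtain ⟨j, -, hj⟩ := Finset.exists_ne_zero_of_sum_ne_zero h
    have h1 : j.val ∈ V := by
      by_contra hn
      apply hj
      rw [hg j, if_neg hn]; simp
    have h2 : (j - k).val ∈ V := by
      by_contra hn
      apply hj
      rw [hg (j - k), if_neg hn]; simp
    refine ⟨(j.val : ℤ) - ((j - k).val : ℤ), ?_, ?_⟩
    · have := hlt _ h1
      have := hlt _ h2
      rw [abs_le]; omega
    · push_cast
      rw [ZMod.natCast_zmod_val, ZMod.natCast_zmod_val]; ring
  · rintro ⟨a, ha, hk⟩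
    have hsub : stft d g g k l = ∑ j ∈ Finset.univ.filter
        (fun j : ZMod d => j.val ∈ V ∧ (j - k).val ∈ V),
        g j * (starRingEnd ℂ) (g (j - k)) * chi d (j * l) := by
      unfold stft
      symm
      apply Finset.sum_subset (Finset.filter_subset _ _)
      intro j _ hj
      simp only [Finset.mem_filter, Finset.mem_univ, true_and, not_and] at hj
      by_cases h1 : j.val ∈ V
      · rw [hg (j - k), if_neg (hj h1)]; simp
      · rw [hg j, if_neg h1]; simp
    rw [hsub]
    apply sum_ne_zero_of_dominant _ _ ZMod.val (ZMod.val_injective d) _ ((2 : ℝ) ^ (-a))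
      (by positivity)
    · intro j hj
      simp only [Finset.mem_filter, Finset.mem_univ, true_and] at hj
      obtain ⟨h1, h2⟩ := hj
      rw [norm_mul, norm_mul, norm_chi, mul_one, RCLike.norm_conj, hg j, hg (j - k), if_pos h1,
        if_pos h2, norm_pow, norm_pow, Complex.norm_ofNat]
      have b1 := hlt _ h1
      have b2 := hlt _ h2
      have hdvd : (d : ℤ) ∣ (j.val : ℤ) - ((j - k).val : ℤ) - a := by
        rw [← ZMod.intCast_zmod_eq_zero_iff_dvd]
        push_cast
        rw [ZMod.natCast_zmod_val, ZMod.natCast_zmod_val, ← hk]; ring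
      have hz : (j.val : ℤ) - ((j - k).val : ℤ) - a = 0 := by
        apply Int.eq_zero_of_abs_lt_dvd hdvd
        rw [abs_le] at ha
        rw [abs_lt]
        omega
      have e : (((j - k).val : ℕ) : ℤ) = j.val + -a := by omega
      rw [← zpow_natCast (2 : ℝ) (j - k).val, e, zpow_add₀ (by norm_num), zpow_natCast,
        show (4 : ℝ) = 2 * 2 by norm_num, mul_pow]
      ring
    · have hi : a.natAbs ≤ m := by
        rw [abs_le] at ha; omega
      obtain ⟨p, hp, q, hq, hqp, hpq⟩ := hdiff _ hi
      have hp' := hlt _ hp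
      have hq' := hlt _ hq
      have vp : ((p : ZMod d)).val = p := ZMod.val_natCast_of_lt (by omega)
      have vq : ((q : ZMod d)).val = q := ZMod.val_natCast_of_lt (by omega)
      rcases le_total 0 a with h0 | h0
      · have e : a = (p : ℤ) - q := by omega
        refine ⟨(p : ZMod d), ?_⟩
        have : (p : ZMod d) - k = q := by rw [hk, e]; push_cast; ring
        simp only [Finset.mem_filter, Finset.mem_univ, true_and]
        rw [this, vp, vq]; exact ⟨hp, hq⟩
      · have e : a = (q : ℤ) - p := by omega
        refine ⟨(q : ZMod d), ?_⟩
        have : (q : ZMod d) - k = p := by rw [hk, e]; push_cast; ring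
        simp only [Finset.mem_filter, Finset.mem_univ, true_and]
        rw [this, vp, vq]; exact ⟨hq, hp⟩
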